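/- Let Y₁,…,Yₙ be a hidden Markov chain on ℕ whose underlying Markov chain is (G,θ)-geometrically ergodic with 1 ≤ G < ∞ and 0 ≤ θ < 1. Then for any n ∈ ℕ and any f : ℕⁿ → ℝ that is 1-Lipschitz with respect to the Hamming metric, and any ε > 0, P(f(Y₁,…,Yₙ) − E f(Y₁,…,Yₙ) > nε) ≤ exp(−n(1−θ)²ε²/(2G²)), and the same bound holds for the lower tail P(E f − f > nε). -/

import Mathlib

open scoped BigOperators
open Filter

noncomputable section

/-- Total variation distance `‖μ − ν‖_TV = (1/2) ∑ₛ |μ(s) − ν(s)|`. -/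
def tv {α : Type*} (μ ν : α → ℝ) : ℝ := (1 / 2) * ∑' s, |μ s - ν s|

/-- Column-stochastic Markov kernel on ℕ: `A y x = A(y|x)`. -/
def IsKernel (A : ℕ → ℕ → ℝ) : Prop :=
  (∀ y x, 0 ≤ A y x) ∧ ∀ x, ∑' y, A y x = 1

/-- Stochastic vector on ℕ. -/
def IsStochastic (ξ : ℕ → ℝ) : Prop := (∀ x, 0 ≤ ξ x) ∧ ∑' x, ξ x = 1

/-- Kernel applied to a vector: `(Aξ)_y = ∑ₓ A(y|x) ξₓ`. -/
def kerApp (A : ℕ → ℕ → ℝ) (ξ : ℕ → ℝ) : ℕ → ℝ := fun y => ∑' x, A y x * ξ x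

/-- Iterated kernel application: `kerIter A s ξ = Aˢ ξ`. -/
def kerIter (A : ℕ → ℕ → ℝ) : ℕ → (ℕ → ℝ) → ℕ → ℝ
  | 0, ξ => ξ
  | s + 1, ξ => kerApp A (kerIter A s ξ)

/-- Point mass at `x`. -/
def dirac (x : ℕ) : ℕ → ℝ := fun y => if y = x then 1 else 0

/-- `(G,θ)`-geometric ergodicity of the kernel `A` with stationary distribution `π`:
`τ_{s+1} = sup_x ‖Aˢ δₓ − π‖_TV ≤ G θˢ` for all `s ≥ 0` (i.e. `τ_s ≤ G θ^{s-1}` for `s ≥ 1`),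
with `1 ≤ G` and `0 ≤ θ < 1`. -/
def IsGeomErgodic (A : ℕ → ℕ → ℝ) (π : ℕ → ℝ) (G θ : ℝ) : Prop :=
  1 ≤ G ∧ 0 ≤ θ ∧ θ < 1 ∧ IsStochastic π ∧ kerApp A π = π ∧
    ∀ (s x : ℕ), tv (kerIter A s (dirac x)) π ≤ G * θ ^ s

/-- Joint law of the Markov chain `(p₁, A)` on `ℕⁿ`. -/
def markovLaw (p : ℕ → ℝ) (A : ℕ → ℕ → ℝ) : (n : ℕ) → (Fin n → ℕ) → ℝ
  | 0, _ => 1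
  | n + 1, x => p (x 0) * ∏ i : Fin n, A (x i.succ) (x i.castSucc)

/-- Joint law of the hidden Markov chain `(p₁, A, B)` on `ℕⁿ`. -/
def hmmLaw (p : ℕ → ℝ) (A B : ℕ → ℕ → ℝ) (n : ℕ) (y : Fin n → ℕ) : ℝ :=
  ∑' x : Fin n → ℕ, markovLaw p A n x * ∏ i : Fin n, B (y i) (x i)

/-- Probability of an event under a law. -/
def prob {α : Type*} (μ : α → ℝ) (S : Set α) : ℝ := ∑' s : S, μ s.1

/-- Expectation of a function under a law. -/
def expect {α : Type*} (μ : α → ℝ) (f : α → ℝ) : ℝ := ∑' s, μ s * f s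

/-- Empirical distribution of a sample `Y ∈ ℕⁿ`. -/
def emp {n : ℕ} (Y : Fin n → ℕ) (v : ℕ) : ℝ :=
  (∑ i : Fin n, if Y i = v then (1 : ℝ) else 0) / n

/-! Condition on the first hidden and observed states `(X₁, Y₁) = z`. Changing `z` moves the
conditional expectation of a Hamming-Lipschitz `f` by at most `1` for the letter `Y₁`, plus the
distance between the laws of the remaining observations started from two different rows of `A`.
The latter is at most the sum of the total variation distances between the laws of the hidden
states: replacing `f` by its infimum over the first letter peels off one coordinate at a time.
Hoeffding's lemma for the average over `z`, with induction on `n` for the remaining observations,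
bounds the moment generating function of `f`, and Chernoff's bound gives the tails. -/

section Expectation

variable {α β : Type*} {μ f g p : α → ℝ} {K : α → β → ℝ} {C : ℝ}

/-- Probability mass functions with real values on an arbitrary type, the analogue of
`IsStochastic` beyond `ℕ`; `HasSum` makes the summability explicit. -/
def IsPMF (μ : α → ℝ) : Prop := (∀ a, 0 ≤ μ a) ∧ HasSum μ 1

theorem IsStochastic.isPMF {ξ : ℕ → ℝ} (hξ : IsStochastic ξ) : IsPMF ξ := by
  have hs : Summable ξ := by
    by_contra h
    exact zero_ne_one (tsum_eq_zero_of_not_summable h ▸ hξ.2)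
  exact ⟨hξ.1, hξ.2 ▸ hs.hasSum⟩

theorem IsKernel.isPMF {A : ℕ → ℕ → ℝ} (hA : IsKernel A) (x : ℕ) : IsPMF (A · x) :=
  IsStochastic.isPMF ⟨fun y => hA.1 y x, hA.2 x⟩

theorem IsPMF.of_unique [Unique α] : IsPMF (fun _ : α => 1) :=
  ⟨fun _ => zero_le_one, hasSum_unique _⟩

theorem IsPMF.summable_mul (hμ : IsPMF μ) (hf : ∀ a, |f a| ≤ C) :
    Summable fun a => μ a * f a := by
  refine (hμ.2.summable.mul_right C).of_norm_bounded fun a => ?_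
  rw [Real.norm_eq_abs, abs_mul, abs_of_nonneg (hμ.1 a)]
  exact mul_le_mul_of_nonneg_left (hf a) (hμ.1 a)

theorem expect_const (hμ : IsPMF μ) (c : ℝ) : expect μ (fun _ => c) = c := by
  rw [expect, tsum_mul_right, hμ.2.tsum_eq, one_mul]

theorem expect_neg : expect μ (fun a => -f a) = -expect μ f := by
  simp only [expect, mul_neg, tsum_neg]

theorem expect_mul_const (c : ℝ) : expect μ (fun a => f a * c) = expect μ f * c := by
  simp only [expect, ← mul_assoc, tsum_mul_right]

theorem expect_add (hf : Summable fun a => μ a * f a) (hg : Summable fun a => μ a * g a) :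
    expect μ (fun a => f a + g a) = expect μ f + expect μ g := by
  simp only [expect, mul_add, hf.tsum_add hg]

theorem expect_sub (hf : Summable fun a => μ a * f a) (hg : Summable fun a => μ a * g a) :
    expect μ (fun a => f a - g a) = expect μ f - expect μ g := by
  simp only [expect, mul_sub, hf.tsum_sub hg]

theorem expect_mono (hμ : ∀ a, 0 ≤ μ a) (hf : Summable fun a => μ a * f a)
    (hg : Summable fun a => μ a * g a) (hfg : ∀ a, f a ≤ g a) : expect μ f ≤ expect μ g :=
  hf.tsum_le_tsum (fun a => mul_le_mul_of_nonneg_left (hfg a) (hμ a)) hg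

theorem expect_mem_Icc {a b : ℝ} (hμ : IsPMF μ) (hf : ∀ x, f x ∈ Set.Icc a b) :
    expect μ f ∈ Set.Icc a b := by
  have hsum := hμ.summable_mul fun x => abs_le_max_abs_abs (hf x).1 (hf x).2
  have hconst (c : ℝ) := hμ.summable_mul (f := fun _ => c) fun _ => le_rfl
  constructor
  · rw [← expect_const hμ a]
    exact expect_mono hμ.1 (hconst a) hsum fun x => (hf x).1
  · rw [← expect_const hμ b]
    exact expect_mono hμ.1 hsum (hconst b) fun x => (hf x).2

theorem abs_expect_le (hμ : IsPMF μ) (hf : ∀ a, |f a| ≤ C) : |expect μ f| ≤ C :=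
  abs_le.2 (expect_mem_Icc hμ fun a => abs_le.1 (hf a))

/-- The joint law of `(a, b)` when `a` has law `p` and `b` has law `K a` given `a`. -/
def compProd (p : α → ℝ) (K : α → β → ℝ) : α × β → ℝ := fun z => p z.1 * K z.1 z.2

/-- The law of `b` when `b` has law `K a` given `a`, and `a` has law `p`. -/
def mixture (p : α → ℝ) (K : α → β → ℝ) : β → ℝ := fun b => ∑' a, p a * K a b

protected theorem IsPMF.compProd (hp : IsPMF p) (hK : ∀ a, IsPMF (K a)) : IsPMF (compProd p K) := by
  have hnonneg : ∀ z, 0 ≤ compProd p K z := fun z => mul_nonneg (hp.1 _) ((hK _).1 _)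
  have hfiber (a : α) : HasSum (fun b => compProd p K (a, b)) (p a) := by
    simpa only [compProd, mul_one] using (hK a).2.mul_left (p a)
  have hsum : Summable (compProd p K) := by
    refine (summable_prod_of_nonneg hnonneg).2 ⟨fun a => (hfiber a).summable, ?_⟩
    simpa only [(hfiber _).tsum_eq] using hp.2.summable
  refine ⟨hnonneg, ?_⟩
  rw [← (hsum.hasSum.prod_fiberwise hfiber).unique hp.2]
  exact hsum.hasSum

protected theorem IsPMF.mixture (hp : IsPMF p) (hK : ∀ a, IsPMF (K a)) : IsPMF (mixture p K) := by
  have hsum : HasSum (fun z : β × α => p z.2 * K z.2 z.1) 1 :=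
    (Equiv.prodComm β α).hasSum_iff.2 (hp.compProd hK).2
  exact ⟨fun b => tsum_nonneg fun a => mul_nonneg (hp.1 a) ((hK a).1 b),
    hsum.prod_fiberwise fun b => (hsum.summable.prod_factor b).hasSum⟩

theorem expect_compProd (hp : IsPMF p) (hK : ∀ a, IsPMF (K a)) {f : α × β → ℝ}
    (hf : ∀ z, |f z| ≤ C) :
    expect (compProd p K) f = expect p fun a => expect (K a) fun b => f (a, b) := by
  rw [expect, ((hp.compProd hK).summable_mul hf).tsum_prod]
  simp only [expect, compProd, mul_assoc, tsum_mul_left]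

theorem expect_mixture (hp : IsPMF p) (hK : ∀ a, IsPMF (K a)) {f : β → ℝ} (hf : ∀ b, |f b| ≤ C) :
    expect (mixture p K) f = expect p fun a => expect (K a) f := by
  have hsum : Summable (Function.uncurry fun a b => p a * K a b * f b) :=
    (hp.compProd hK).summable_mul (f := fun z : α × β => f z.2) fun z => hf z.2
  simp only [expect, mixture, ← tsum_mul_right, ← tsum_mul_left, ← mul_assoc]
  exact hsum.tsum_comm

theorem expect_comm {q : β → ℝ} (hp : IsPMF p) (hq : IsPMF q) {f : α → β → ℝ}
    (hf : ∀ a b, |f a b| ≤ C) :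
    (expect p fun a => expect q (f a)) = expect q fun b => expect p fun a => f a b := by
  have hsum : Summable (Function.uncurry fun a b => p a * q b * f a b) :=
    (hp.compProd fun _ => hq).summable_mul (f := Function.uncurry f) fun z => hf z.1 z.2
  simp only [expect, ← tsum_mul_left, mul_left_comm (q _), ← mul_assoc]
  exact hsum.tsum_comm.symm

end Expectation

section ConsLaw

variable {α : Type*} {n : ℕ} {μ : (Fin (n + 1) → α) → ℝ} {p : α → ℝ} {K : α → (Fin n → α) → ℝ}

theorem isPMF_of_cons (hp : IsPMF p) (hK : ∀ a, IsPMF (K a))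
    (hμ : ∀ a s, μ (Fin.cons a s) = p a * K a s) : IsPMF μ := by
  refine ⟨fun x => ?_, (Fin.consEquiv fun _ => α).hasSum_iff.1 ?_⟩
  · rw [← Fin.cons_self_tail x, hμ]
    exact mul_nonneg (hp.1 _) ((hK _).1 _)
  · rw [show μ ∘ Fin.consEquiv (fun _ => α) = compProd p K from funext fun z => hμ z.1 z.2]
    exact (hp.compProd hK).2

theorem expect_of_cons (hp : IsPMF p) (hK : ∀ a, IsPMF (K a))
    (hμ : ∀ a s, μ (Fin.cons a s) = p a * K a s) {f : (Fin (n + 1) → α) → ℝ} {C : ℝ}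
    (hf : ∀ x, |f x| ≤ C) :
    expect μ f = expect p fun a => expect (K a) fun s => f (Fin.cons a s) := by
  rw [← expect_compProd hp hK (f := fun z => f (Fin.cons z.1 z.2)) fun z => hf _, expect,
    ← (Fin.consEquiv fun _ => α).tsum_eq]
  exact tsum_congr fun z => congrArg (· * f (Fin.cons z.1 z.2)) (hμ z.1 z.2)

/-- The law of a word whose letters are independent with laws `μ 0, …, μ (n - 1)`. -/
def prodLaw (μ : Fin n → α → ℝ) : (Fin n → α) → ℝ := fun x => ∏ i, μ i (x i)

theorem prodLaw_cons (μ : Fin (n + 1) → α → ℝ) (a : α) (s : Fin n → α) :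
    prodLaw μ (Fin.cons a s) = μ 0 a * prodLaw (fun i => μ i.succ) s := by
  simp only [prodLaw, Fin.prod_univ_succ, Fin.cons_zero, Fin.cons_succ]

protected theorem IsPMF.prodLaw {μ : Fin n → α → ℝ} (hμ : ∀ i, IsPMF (μ i)) :
    IsPMF (prodLaw μ) := by
  induction n with
  | zero =>
    rw [show prodLaw μ = fun _ => 1 from funext fun _ => Finset.prod_empty]
    exact of_unique
  | succ n ih => exact isPMF_of_cons (hμ 0) (fun _ => ih fun i => hμ i.succ) (prodLaw_cons μ)

end ConsLaw

section TotalVariation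

variable {α : Type*} {μ ν ρ : α → ℝ}

theorem tv_comm (μ ν : α → ℝ) : tv μ ν = tv ν μ := by
  simp only [tv, abs_sub_comm]

theorem tv_triangle (hμ : Summable μ) (hν : Summable ν) (hρ : Summable ρ) :
    tv μ ρ ≤ tv μ ν + tv ν ρ := by
  have hμν := (hμ.sub hν).abs
  have hνρ := (hν.sub hρ).abs
  rw [tv, tv, tv, ← mul_add, ← hμν.tsum_add hνρ]
  gcongr
  · exact (hμ.sub hρ).abs
  · exact hμν.add hνρ
  · exact abs_sub_le _ _ _

theorem expect_sub_expect_le_tv {f : α → ℝ} {a b : ℝ} (hμ : IsPMF μ) (hν : IsPMF ν)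
    (hf : ∀ x, f x ∈ Set.Icc a b) : expect μ f - expect ν f ≤ (b - a) * tv μ ν := by
  -- Only `f` minus the midpoint of `[a, b]` matters, which is where the factor `1 / 2` comes from.
  have hmid (x : α) : |f x - (a + b) / 2| ≤ (b - a) / 2 :=
    abs_le.2 ⟨by linarith [(hf x).1], by linarith [(hf x).2]⟩
  have hcenter {ξ : α → ℝ} (hξ : IsPMF ξ) :
      expect ξ f = expect ξ (fun x => f x - (a + b) / 2) + (a + b) / 2 := by
    have h := expect_add (hξ.summable_mul hmid)
      (hξ.summable_mul (f := fun _ => (a + b) / 2) fun _ => le_rfl)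
    simpa only [sub_add_cancel, expect_const hξ] using h
  have hμf := hμ.summable_mul hmid
  have hνf := hν.summable_mul hmid
  rw [hcenter hμ, hcenter hν, add_sub_add_right_eq_sub, expect, expect, ← hμf.tsum_sub hνf, tv,
    ← mul_assoc, mul_one_div, ← tsum_mul_left]
  refine (hμf.sub hνf).tsum_le_tsum (fun x => ?_)
    ((hμ.2.summable.sub hν.2.summable).abs.mul_left _)
  calc μ x * (f x - (a + b) / 2) - ν x * (f x - (a + b) / 2)
      = (f x - (a + b) / 2) * (μ x - ν x) := by ring
    _ ≤ |f x - (a + b) / 2| * |μ x - ν x| := (le_abs_self _).trans (abs_mul _ _).le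
    _ ≤ (b - a) / 2 * |μ x - ν x| := by gcongr; exact hmid x

end TotalVariation

theorem mem_Icc_iInf_of_sub_le {ι : Type*} {f : ι → ℝ} {c : ℝ} (hf : ∀ i j, f i - f j ≤ c)
    (i : ι) : f i ∈ Set.Icc (⨅ j, f j) ((⨅ j, f j) + c) := by
  have : Nonempty ι := ⟨i⟩
  refine ⟨ciInf_le ⟨f i - c, Set.forall_mem_range.2 fun j => sub_le_comm.1 (hf i j)⟩ i, ?_⟩
  exact sub_le_iff_le_add.1 (le_ciInf fun j => sub_le_comm.1 (hf i j))

section ExponentialMoments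

open MeasureTheory ProbabilityTheory

variable {α : Type*} {μ f : α → ℝ} {C : ℝ}

/-- A real-valued probability mass function as a `PMF`, giving access to Hoeffding's lemma and
Chernoff's bound for measures. -/
def IsPMF.toPMF (hμ : IsPMF μ) : PMF α :=
  ⟨fun a => ENNReal.ofReal (μ a), by
    rw [ENNReal.summable.hasSum_iff, ← ENNReal.ofReal_tsum_of_nonneg hμ.1 hμ.2.summable,
      hμ.2.tsum_eq, ENNReal.ofReal_one]⟩

theorem IsPMF.toReal_toPMF (hμ : IsPMF μ) (a : α) : (hμ.toPMF a).toReal = μ a :=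
  ENNReal.toReal_ofReal (hμ.1 a)

theorem abs_exp_mul_le {u : ℝ} (hu : |u| ≤ C) (t : ℝ) :
    |Real.exp (t * u)| ≤ Real.exp (|t| * C) := by
  rw [Real.abs_exp, Real.exp_le_exp]
  exact (le_abs_self _).trans ((abs_mul t u).trans_le (by gcongr))

theorem expect_eq_integral [MeasurableSpace α] [MeasurableSingletonClass α] (hμ : IsPMF μ)
    (hf : Integrable f hμ.toPMF.toMeasure) :
    expect μ f = ∫ a, f a ∂hμ.toPMF.toMeasure := by
  simp only [PMF.integral_eq_tsum _ _ hf, hμ.toReal_toPMF, smul_eq_mul, expect]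

theorem prob_eq_measureReal [MeasurableSpace α] [MeasurableSingletonClass α] (hμ : IsPMF μ)
    (S : Set α) : prob μ S = hμ.toPMF.toMeasure.real S := by
  rw [prob, tsum_subtype, measureReal_def, PMF.toMeasure_apply_eq_tsum, ENNReal.tsum_toReal_eq]
  · refine tsum_congr fun a => ?_
    by_cases ha : a ∈ S <;> simp [ha, hμ.toReal_toPMF]
  · intro a
    by_cases ha : a ∈ S <;> simp [ha, hμ.toPMF.apply_ne_top]

theorem IsPMF.integrable_exp_mul [MeasurableSpace α] [DiscreteMeasurableSpace α] (hμ : IsPMF μ)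
    (hf : ∀ a, |f a| ≤ C) (t : ℝ) :
    Integrable (fun a => Real.exp (t * f a)) hμ.toPMF.toMeasure :=
  .of_bound Measurable.of_discrete.aestronglyMeasurable _
    (.of_forall fun a => abs_exp_mul_le (hf a) t)

theorem expect_exp_mul_le_of_sub_le (hμ : IsPMF μ) {c : ℝ} (hf : ∀ a b, f a - f b ≤ c) (t : ℝ) :
    expect μ (fun a => Real.exp (t * f a)) ≤
      Real.exp (t * expect μ f + t ^ 2 / 8 * c ^ 2) := by
  let : MeasurableSpace α := ⊤
  have hrange := mem_Icc_iInf_of_sub_le hf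
  have hbound (a : α) := abs_le_max_abs_abs (hrange a).1 (hrange a).2
  have hmeas : AEMeasurable f hμ.toPMF.toMeasure := Measurable.of_discrete.aemeasurable
  have hmean : expect μ f = ∫ a, f a ∂hμ.toPMF.toMeasure :=
    expect_eq_integral hμ (.of_mem_Icc _ _ hmeas (.of_forall hrange))
  have hmgf : expect μ (fun a => Real.exp (t * f a)) * Real.exp (t * -expect μ f) ≤
      Real.exp (((‖c‖₊ / 2) ^ 2 : NNReal) * t ^ 2 / 2) := by
    have hcentered := (hasSubgaussianMGF_of_mem_Icc hmeas (.of_forall hrange)).mgf_le t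
    rw [← hmean, add_sub_cancel_left] at hcentered
    simp only [sub_eq_add_neg, mgf_add_const] at hcentered
    rwa [expect_eq_integral hμ (hμ.integrable_exp_mul hbound t)]
  calc expect μ (fun a => Real.exp (t * f a))
      = expect μ (fun a => Real.exp (t * f a)) * Real.exp (t * -expect μ f) *
          Real.exp (t * expect μ f) := by
        rw [mul_assoc, ← Real.exp_add, mul_neg, neg_add_cancel, Real.exp_zero, mul_one]
    _ ≤ Real.exp (((‖c‖₊ / 2) ^ 2 : NNReal) * t ^ 2 / 2) * Real.exp (t * expect μ f) := by gcongr
    _ = Real.exp (t * expect μ f + t ^ 2 / 8 * c ^ 2) := by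
        rw [← Real.exp_add, NNReal.coe_pow, NNReal.coe_div, coe_nnnorm, Real.norm_eq_abs, div_pow,
          sq_abs, NNReal.coe_ofNat]
        ring_nf

theorem prob_lt_sub_expect_le (hμ : IsPMF μ) (hf : ∀ a, |f a| ≤ C) {v : ℝ}
    (hmgf : ∀ t, expect μ (fun a => Real.exp (t * f a)) ≤
      Real.exp (t * expect μ f + t ^ 2 / 8 * v)) {r : ℝ} (hr : 0 ≤ r) :
    prob μ {a | r < f a - expect μ f} ≤ Real.exp (-2 * r ^ 2 / v) := by
  let : MeasurableSpace α := ⊤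
  rw [prob_eq_measureReal hμ]
  rcases le_or_gt v 0 with hv | hv
  · refine measureReal_le_one.trans (Real.one_le_exp ?_)
    exact div_nonneg_of_nonpos (by nlinarith [sq_nonneg r]) hv
  set E := expect μ f
  -- `t = 4 * r / v` minimises the exponent `-t * r + t ^ 2 / 8 * v`.
  calc hμ.toPMF.toMeasure.real {a | r < f a - E}
      ≤ hμ.toPMF.toMeasure.real {a | E + r ≤ f a} :=
        measureReal_mono fun a (ha : r < f a - E) => (lt_sub_iff_add_lt'.1 ha).le
    _ ≤ Real.exp (-(4 * r / v) * (E + r)) * expect μ fun a => Real.exp (4 * r / v * f a) := by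
        rw [expect_eq_integral hμ (hμ.integrable_exp_mul hf _)]
        exact measure_ge_le_exp_mul_mgf _ (by positivity) (hμ.integrable_exp_mul hf _)
    _ ≤ Real.exp (-(4 * r / v) * (E + r)) *
          Real.exp (4 * r / v * E + (4 * r / v) ^ 2 / 8 * v) := by
        gcongr; exact hmgf _
    _ = Real.exp (-2 * r ^ 2 / v) := by
        rw [← Real.exp_add]
        congr 1
        field_simp
        ring

end ExponentialMoments

section HammingLipschitz

variable {ι α : Type*} [Fintype ι] [DecidableEq α] {f : (ι → α) → ℝ}

/-- Functions that are `1`-Lipschitz for the Hamming metric on words with letters in `α`. -/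
def HammingLipschitz (f : (ι → α) → ℝ) : Prop := ∀ x y, |f x - f y| ≤ hammingDist x y

theorem HammingLipschitz.neg (hf : HammingLipschitz f) : HammingLipschitz fun x => -f x :=
  fun x y => by simpa only [neg_sub_neg, abs_sub_comm] using hf x y

theorem HammingLipschitz.exists_abs_le (hf : HammingLipschitz f) : ∃ C, ∀ x, |f x| ≤ C := by
  cases isEmpty_or_nonempty (ι → α) with
  | inl _ => exact ⟨0, isEmptyElim⟩
  | inr h =>
    obtain ⟨x₀⟩ := h
    refine ⟨|f x₀| + Fintype.card ι, fun x => ?_⟩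
    have hdist : (hammingDist x x₀ : ℝ) ≤ Fintype.card ι := mod_cast hammingDist_le_card_fintype
    linarith [abs_sub_abs_le_abs_sub (f x) (f x₀), hf x x₀]

theorem HammingLipschitz.iInf {κ : Type*} [Nonempty κ] {F : κ → (ι → α) → ℝ}
    (hF : ∀ k, HammingLipschitz (F k)) (hbdd : ∀ x, BddBelow (Set.range (F · x))) :
    HammingLipschitz fun x => ⨅ k, F k x := by
  have hle (x y : ι → α) : (⨅ k, F k x) - hammingDist x y ≤ ⨅ k, F k y :=
    le_ciInf fun k => by linarith [ciInf_le (hbdd x) k, (abs_le.1 (hF k x y)).2]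
  refine fun x y => abs_sub_le_iff.2 ⟨by linarith [hle x y], ?_⟩
  linarith [hammingDist_comm x y ▸ hle y x]

variable {n : ℕ} {f : (Fin (n + 1) → α) → ℝ}

theorem hammingDist_cons (a b : α) (s t : Fin n → α) :
    hammingDist (Fin.cons a s : Fin (n + 1) → α) (Fin.cons b t) =
      (if a ≠ b then 1 else 0) + hammingDist s t := by
  simp only [hammingDist, Fin.card_filter_univ_succ, Fin.cons_zero, Fin.cons_succ]
  split_ifs <;> omega

theorem HammingLipschitz.cons (hf : HammingLipschitz f) (a : α) :
    HammingLipschitz fun s => f (Fin.cons a s) := fun s t => by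
  simpa [hammingDist_cons] using hf (Fin.cons a s) (Fin.cons a t)

theorem HammingLipschitz.sub_cons_le_one (hf : HammingLipschitz f) (s : Fin n → α) (a b : α) :
    f (Fin.cons a s) - f (Fin.cons b s) ≤ 1 := by
  refine (le_abs_self _).trans ((hf _ _).trans ?_)
  rw [hammingDist_cons, hammingDist_self]
  split_ifs <;> norm_num

theorem HammingLipschitz.iInf_cons [Nonempty α] (hf : HammingLipschitz f) :
    HammingLipschitz fun s => ⨅ a, f (Fin.cons a s) := by
  obtain ⟨C, hC⟩ := hf.exists_abs_le
  exact .iInf (fun a => hf.cons a) fun s =>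
    ⟨-C, Set.forall_mem_range.2 fun a => (abs_le.1 (hC _)).1⟩

end HammingLipschitz

section Kernels

variable {A : ℕ → ℕ → ℝ} {ξ : ℕ → ℝ}

theorem isPMF_dirac (x : ℕ) : IsPMF (dirac x) :=
  ⟨fun y => by unfold dirac; positivity, hasSum_ite_eq x 1⟩

theorem expect_dirac (x : ℕ) (f : ℕ → ℝ) : expect (dirac x) f = f x := by
  simp only [expect, dirac, ite_mul, one_mul, zero_mul, tsum_ite_eq]

theorem mixture_dirac (ξ : ℕ → ℝ) : mixture ξ dirac = ξ := by
  funext y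
  simp only [mixture, dirac, mul_ite, mul_one, mul_zero, tsum_ite_eq']

theorem kerApp_eq_mixture (A : ℕ → ℕ → ℝ) (ξ : ℕ → ℝ) :
    kerApp A ξ = mixture ξ fun x => (A · x) :=
  funext fun _ => tsum_congr fun _ => mul_comm _ _

theorem kerApp_dirac (A : ℕ → ℕ → ℝ) (x : ℕ) : kerApp A (dirac x) = (A · x) := by
  rw [kerApp_eq_mixture]
  exact funext fun y => expect_dirac x (A y)

protected theorem IsPMF.kerApp (hA : IsKernel A) (hξ : IsPMF ξ) : IsPMF (kerApp A ξ) :=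
  kerApp_eq_mixture A ξ ▸ hξ.mixture hA.isPMF

protected theorem IsPMF.kerIter (hA : IsKernel A) (hξ : IsPMF ξ) : ∀ s, IsPMF (kerIter A s ξ)
  | 0 => hξ
  | s + 1 => (hξ.kerIter hA s).kerApp hA

theorem kerIter_kerApp (A : ℕ → ℕ → ℝ) (ξ : ℕ → ℝ) (s : ℕ) :
    kerIter A s (kerApp A ξ) = kerIter A (s + 1) ξ := by
  induction s with
  | zero => rfl
  | succ s ih => exact congrArg (kerApp A) ih

end Kernels

section HiddenMarkov

variable {A B : ℕ → ℕ → ℝ} {p : ℕ → ℝ} {n : ℕ}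

theorem markovLaw_cons (p : ℕ → ℝ) (A : ℕ → ℕ → ℝ) (x : ℕ) (s : Fin n → ℕ) :
    markovLaw p A (n + 1) (Fin.cons x s) = p x * markovLaw (A · x) A n s := by
  cases n with
  | zero => simp [markovLaw]
  | succ n =>
    simp only [markovLaw, Fin.cons_zero, Fin.prod_univ_succ, Fin.cons_succ, Fin.castSucc_zero,
      ← Fin.succ_castSucc]

protected theorem IsPMF.markovLaw (hA : IsKernel A) (hp : IsPMF p) : IsPMF (markovLaw p A n) := by
  induction n generalizing p with
  | zero => exact of_unique
  | succ n ih => exact isPMF_of_cons hp (fun x => ih (hA.isPMF x)) (markovLaw_cons p A)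

theorem hmmLaw_eq_mixture (p : ℕ → ℝ) (A B : ℕ → ℕ → ℝ) (n : ℕ) :
    hmmLaw p A B n = mixture (markovLaw p A n) fun x => prodLaw fun i => (B · (x i)) := rfl

protected theorem IsPMF.hmmLaw (hA : IsKernel A) (hB : IsKernel B) (hp : IsPMF p) :
    IsPMF (hmmLaw p A B n) :=
  (hp.markovLaw hA).mixture fun x => IsPMF.prodLaw fun i => hB.isPMF (x i)

theorem expect_hmmLaw_zero (p : ℕ → ℝ) (A B : ℕ → ℕ → ℝ) (f : (Fin 0 → ℕ) → ℝ) :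
    expect (hmmLaw p A B 0) f = f default := by
  simp only [expect, hmmLaw, markovLaw, tsum_fintype, Fintype.sum_unique, Finset.univ_eq_empty,
    Finset.prod_empty, one_mul]
  exact congrArg f (Subsingleton.elim _ _)

/-- The law of `(X₁, Y₁)`. -/
def headLaw (p : ℕ → ℝ) (B : ℕ → ℕ → ℝ) : ℕ × ℕ → ℝ := compProd p fun x => (B · x)

/-- The conditional expectation of `f (Y₁, …, Yₙ₊₁)` given `(X₁, Y₁) = z`. -/
def headCondExp (A B : ℕ → ℕ → ℝ) (f : (Fin (n + 1) → ℕ) → ℝ) (z : ℕ × ℕ) : ℝ :=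
  expect (hmmLaw (A · z.1) A B n) fun t => f (Fin.cons z.2 t)

protected theorem IsPMF.headLaw (hB : IsKernel B) (hp : IsPMF p) : IsPMF (headLaw p B) :=
  hp.compProd hB.isPMF

theorem abs_headCondExp_le (hA : IsKernel A) (hB : IsKernel B) {f : (Fin (n + 1) → ℕ) → ℝ} {C : ℝ}
    (hf : ∀ y, |f y| ≤ C) (z : ℕ × ℕ) : |headCondExp A B f z| ≤ C :=
  abs_expect_le ((hA.isPMF z.1).hmmLaw hA hB) fun _ => hf _

theorem expect_hmmLaw_succ (hA : IsKernel A) (hB : IsKernel B) (hp : IsPMF p)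
    {f : (Fin (n + 1) → ℕ) → ℝ} {C : ℝ} (hf : ∀ y, |f y| ≤ C) :
    expect (hmmLaw p A B (n + 1)) f = expect (headLaw p B) (headCondExp A B f) := by
  have hemit {m : ℕ} (x : Fin m → ℕ) : IsPMF (prodLaw fun i => (B · (x i))) :=
    .prodLaw fun i => hB.isPMF (x i)
  have htail (x : ℕ) : IsPMF (markovLaw (A · x) A n) := (hA.isPMF x).markovLaw hA
  have hemit_cons (x : ℕ) (s : Fin n → ℕ) :
      expect (prodLaw fun i => (B · ((Fin.cons x s : Fin (n + 1) → ℕ) i))) f =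
        expect (B · x) fun y =>
          expect (prodLaw fun i => (B · (s i))) fun t => f (Fin.cons y t) :=
    expect_of_cons (hB.isPMF x) (fun _ => hemit s) (prodLaw_cons _) hf
  have htail_mixture (x y : ℕ) :
      (expect (markovLaw (A · x) A n) fun s =>
        expect (prodLaw fun i => (B · (s i))) fun t => f (Fin.cons y t)) =
        headCondExp A B f (x, y) :=
    (expect_mixture (htail x) hemit fun t => hf (Fin.cons y t)).symm
  rw [hmmLaw_eq_mixture, expect_mixture (hp.markovLaw hA) hemit hf,
    expect_of_cons hp htail (markovLaw_cons p A) fun x => abs_expect_le (hemit x) hf, headLaw,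
    expect_compProd hp hB.isPMF (abs_headCondExp_le hA hB hf)]
  refine congrArg (expect p) (funext fun x => ?_)
  simp only [hemit_cons, ← htail_mixture]
  exact expect_comm (htail x) (hB.isPMF x) fun s y => abs_expect_le (hemit s) fun t => hf _

theorem expect_hmmLaw_mixture {α : Type*} {q : α → ℝ} {K : α → ℕ → ℝ} (hA : IsKernel A)
    (hB : IsKernel B) (hq : IsPMF q) (hK : ∀ a, IsPMF (K a)) {f : (Fin n → ℕ) → ℝ} {C : ℝ}
    (hf : ∀ y, |f y| ≤ C) :
    expect (hmmLaw (mixture q K) A B n) f = expect q fun a => expect (hmmLaw (K a) A B n) f := by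
  cases n with
  | zero => simp only [expect_hmmLaw_zero, expect_const hq]
  | succ n =>
    have hcond := abs_headCondExp_le hA hB hf
    simp only [expect_hmmLaw_succ hA hB (hK _) hf,
      expect_hmmLaw_succ hA hB (hq.mixture hK) hf, headLaw,
      expect_compProd (hK _) hB.isPMF hcond, expect_compProd (hq.mixture hK) hB.isPMF hcond]
    exact expect_mixture hq hK fun x => abs_expect_le (hB.isPMF x) fun y => hcond (x, y)

theorem expect_hmmLaw_tail (hA : IsKernel A) (hB : IsKernel B) (hp : IsPMF p)
    {g : (Fin n → ℕ) → ℝ} {C : ℝ} (hg : ∀ t, |g t| ≤ C) :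
    (expect (hmmLaw p A B (n + 1)) fun y => g (Fin.tail y)) =
      expect (hmmLaw (kerApp A p) A B n) g := by
  have hcond := abs_headCondExp_le hA hB (f := fun y => g (Fin.tail y)) fun y => hg (Fin.tail y)
  rw [expect_hmmLaw_succ hA hB hp fun y => hg (Fin.tail y), headLaw,
    expect_compProd hp hB.isPMF hcond, kerApp_eq_mixture,
    expect_hmmLaw_mixture hA hB hp hA.isPMF hg]
  simp only [headCondExp, Fin.tail_cons, expect_const (hB.isPMF _)]

theorem expect_hmmLaw_sub_le_sum_tv (hA : IsKernel A) (hB : IsKernel B) {ξ ζ : ℕ → ℝ}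
    (hξ : IsPMF ξ) (hζ : IsPMF ζ) {f : (Fin n → ℕ) → ℝ} (hf : HammingLipschitz f) :
    expect (hmmLaw ξ A B n) f - expect (hmmLaw ζ A B n) f ≤
      ∑ s ∈ Finset.range n, tv (kerIter A s ξ) (kerIter A s ζ) := by
  induction n generalizing ξ ζ with
  | zero => simp only [expect_hmmLaw_zero, sub_self, Finset.range_zero, Finset.sum_empty, le_refl]
  | succ n ih =>
    -- Split `f` into the infimum `g` over its first letter and a remainder `h` in `[0, 1]`.
    let g : (Fin n → ℕ) → ℝ := fun t => ⨅ a, f (Fin.cons a t)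
    let h : (Fin (n + 1) → ℕ) → ℝ := fun y => f y - g (Fin.tail y)
    have hg : HammingLipschitz g := hf.iInf_cons
    have hh (y : Fin (n + 1) → ℕ) : h y ∈ Set.Icc 0 1 := by
      have hmem := mem_Icc_iInf_of_sub_le (hf.sub_cons_le_one (Fin.tail y)) (y 0)
      rw [Fin.cons_self_tail] at hmem
      exact ⟨sub_nonneg.2 hmem.1, sub_le_iff_le_add'.2 hmem.2⟩
    obtain ⟨C, hC⟩ := hg.exists_abs_le
    have hh_abs (y) : |h y| ≤ max |0| |1| := abs_le_max_abs_abs (hh y).1 (hh y).2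
    have hsplit {p : ℕ → ℝ} (hp : IsPMF p) : expect (hmmLaw p A B (n + 1)) f =
        (expect p fun x => expect (hmmLaw (dirac x) A B (n + 1)) h) +
          expect (hmmLaw (kerApp A p) A B n) g := by
      have hlaw : IsPMF (hmmLaw p A B (n + 1)) := hp.hmmLaw hA hB
      rw [← expect_hmmLaw_mixture hA hB hp isPMF_dirac hh_abs, mixture_dirac,
        ← expect_hmmLaw_tail hA hB hp hC, ← expect_add (hlaw.summable_mul hh_abs)
          (hlaw.summable_mul fun y => hC (Fin.tail y))]
      simp only [h, sub_add_cancel]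
    have hhead := expect_sub_expect_le_tv hξ hζ fun x =>
      expect_mem_Icc ((isPMF_dirac x).hmmLaw hA hB) hh
    have htail := ih (hξ.kerApp hA) (hζ.kerApp hA) hg
    simp only [kerIter_kerApp] at htail
    rw [sub_zero, one_mul] at hhead
    rw [hsplit hξ, hsplit hζ, Finset.sum_range_succ', add_sub_add_comm, add_comm]
    exact add_le_add htail hhead

end HiddenMarkov

section Concentration

variable {A B : ℕ → ℕ → ℝ} {p τ : ℕ → ℝ} {n : ℕ}

/-- `τ s` bounds the total variation distance between the laws, after `s` steps of `A`, of two
chains with arbitrary initial states (Dobrushin's coefficient of `Aˢ`). -/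
def IsMixingBound (A : ℕ → ℕ → ℝ) (τ : ℕ → ℝ) : Prop :=
  ∀ s x x', tv (kerIter A s (dirac x)) (kerIter A s (dirac x')) ≤ τ s

theorem IsMixingBound.one_le (hτ : IsMixingBound A τ) : 1 ≤ τ 0 := by
  have hmem (y : ℕ) : dirac 0 y ∈ Set.Icc (0 : ℝ) 1 := by
    unfold dirac
    split_ifs <;> simp
  have hfar : 1 ≤ tv (dirac 0) (dirac 1) := by
    simpa [expect_dirac, dirac] using
      expect_sub_expect_le_tv (f := dirac 0) (isPMF_dirac 0) (isPMF_dirac 1) hmem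
  exact hfar.trans (hτ 0 0 1)

theorem IsGeomErgodic.isMixingBound {π : ℕ → ℝ} {G θ : ℝ} (hA : IsKernel A)
    (hge : IsGeomErgodic A π G θ) : IsMixingBound A fun s => 2 * G * θ ^ s := by
  obtain ⟨-, -, -, hπ, -, hτ⟩ := hge
  intro s x x'
  have hiter (x : ℕ) : Summable (kerIter A s (dirac x)) := ((isPMF_dirac x).kerIter hA s).2.summable
  have h := tv_triangle (hiter x) hπ.isPMF.2.summable (hiter x')
  rw [tv_comm π] at h
  linarith [hτ s x, hτ s x']

theorem headCondExp_sub_le (hA : IsKernel A) (hB : IsKernel B) (hτ : IsMixingBound A τ)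
    {f : (Fin (n + 1) → ℕ) → ℝ} (hf : HammingLipschitz f) (z z' : ℕ × ℕ) :
    headCondExp A B f z - headCondExp A B f z' ≤ ∑ s ∈ Finset.range (n + 1), τ s := by
  obtain ⟨C, hC⟩ := hf.exists_abs_le
  have hlaw : IsPMF (hmmLaw (A · z'.1) A B n) := (hA.isPMF z'.1).hmmLaw hA hB
  have hletter : headCondExp A B f (z'.1, z.2) - headCondExp A B f z' ≤ 1 := by
    rw [headCondExp, headCondExp, ← expect_sub (hlaw.summable_mul fun _ => hC _)
      (hlaw.summable_mul fun _ => hC _)]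
    refine (expect_mem_Icc (a := -1) hlaw fun t => ⟨?_, hf.sub_cons_le_one t z.2 z'.2⟩).2
    linarith [hf.sub_cons_le_one t z'.2 z.2]
  have hstate : headCondExp A B f z - headCondExp A B f (z'.1, z.2) ≤
      ∑ s ∈ Finset.range n, τ (s + 1) := by
    refine (expect_hmmLaw_sub_le_sum_tv hA hB (hA.isPMF z.1) (hA.isPMF z'.1)
      (hf.cons z.2)).trans (Finset.sum_le_sum fun s _ => ?_)
    rw [← kerApp_dirac, ← kerApp_dirac, kerIter_kerApp, kerIter_kerApp]
    exact hτ (s + 1) z.1 z'.1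
  rw [Finset.sum_range_succ']
  linarith [hτ.one_le]

theorem expect_exp_mul_hmmLaw_le (hA : IsKernel A) (hB : IsKernel B) (hτ : IsMixingBound A τ)
    (hp : IsPMF p) {f : (Fin n → ℕ) → ℝ} (hf : HammingLipschitz f) (t : ℝ) :
    expect (hmmLaw p A B n) (fun y => Real.exp (t * f y)) ≤
      Real.exp (t * expect (hmmLaw p A B n) f +
        t ^ 2 / 8 * ∑ k ∈ Finset.range n, (∑ s ∈ Finset.range (k + 1), τ s) ^ 2) := by
  induction n generalizing p with
  | zero => simp [expect_hmmLaw_zero]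
  | succ n ih =>
    obtain ⟨C, hC⟩ := hf.exists_abs_le
    have hexp (y) := abs_exp_mul_le (hC y) t
    have hhead : IsPMF (headLaw p B) := hp.headLaw hB
    have hcond := abs_headCondExp_le hA hB hC
    rw [expect_hmmLaw_succ hA hB hp hexp, expect_hmmLaw_succ hA hB hp hC, Finset.sum_range_succ]
    set m := headCondExp A B f
    set v := ∑ k ∈ Finset.range n, (∑ s ∈ Finset.range (k + 1), τ s) ^ 2
    calc expect (headLaw p B) (headCondExp A B fun y => Real.exp (t * f y))
        ≤ expect (headLaw p B) fun z => Real.exp (t * m z) * Real.exp (t ^ 2 / 8 * v) := by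
          refine expect_mono hhead.1 (hhead.summable_mul (abs_headCondExp_le hA hB hexp)) ?_
            fun z => ?_
          · simpa only [mul_assoc] using
              (hhead.summable_mul fun z => abs_exp_mul_le (hcond z) t).mul_right _
          · rw [← Real.exp_add]
            exact ih (hA.isPMF z.1) (hf.cons z.2)
      _ = expect (headLaw p B) (fun z => Real.exp (t * m z)) * Real.exp (t ^ 2 / 8 * v) :=
          expect_mul_const _
      _ ≤ Real.exp (t * expect (headLaw p B) m +
            t ^ 2 / 8 * (∑ s ∈ Finset.range (n + 1), τ s) ^ 2) * Real.exp (t ^ 2 / 8 * v) := by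
          gcongr
          exact expect_exp_mul_le_of_sub_le hhead (headCondExp_sub_le hA hB hτ hf) t
      _ = _ := by
          rw [← Real.exp_add]
          ring_nf

theorem exp_neg_div_sum_geom_sq_le {G θ : ℝ} (hG : 0 < G) (hθ₀ : 0 ≤ θ) (hθ₁ : θ < 1)
    (n : ℕ) (ε : ℝ) :
    Real.exp (-2 * (n * ε) ^ 2 /
        ∑ k ∈ Finset.range n, (∑ s ∈ Finset.range (k + 1), 2 * G * θ ^ s) ^ 2) ≤
      Real.exp (-(n * (1 - θ) ^ 2 * ε ^ 2) / (2 * G ^ 2)) := by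
  rcases n.eq_zero_or_pos with rfl | hn
  · simp
  have hθ : 0 < 1 - θ := sub_pos.2 hθ₁
  have hgeom (k : ℕ) : ∑ s ∈ Finset.range (k + 1), 2 * G * θ ^ s ≤ 2 * G / (1 - θ) := by
    rw [← Finset.mul_sum, div_eq_mul_inv, ← tsum_geometric_of_lt_one hθ₀ hθ₁]
    gcongr
    exact (summable_geometric_of_lt_one hθ₀ hθ₁).sum_le_tsum _ fun s _ => pow_nonneg hθ₀ s
  have hpos (k : ℕ) : 0 < ∑ s ∈ Finset.range (k + 1), 2 * G * θ ^ s := by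
    rw [Finset.sum_range_succ']
    positivity
  have hsum : ∑ k ∈ Finset.range n, (∑ s ∈ Finset.range (k + 1), 2 * G * θ ^ s) ^ 2 ≤
      n * (2 * G / (1 - θ)) ^ 2 := by
    rw [← nsmul_eq_mul, ← Finset.card_range n, ← Finset.sum_const, Finset.card_range]
    exact Finset.sum_le_sum fun k _ => pow_le_pow_left₀ (hpos k).le (hgeom k) 2
  have hsum_pos : 0 < ∑ k ∈ Finset.range n, (∑ s ∈ Finset.range (k + 1), 2 * G * θ ^ s) ^ 2 :=
    Finset.sum_pos (fun k _ => pow_pos (hpos k) 2) ⟨0, Finset.mem_range.2 hn⟩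
  rw [Real.exp_le_exp, neg_mul, neg_div, neg_div, neg_le_neg_iff]
  calc n * (1 - θ) ^ 2 * ε ^ 2 / (2 * G ^ 2)
      = 2 * (n * ε) ^ 2 / (n * (2 * G / (1 - θ)) ^ 2) := by field_simp
    _ ≤ _ := by gcongr

theorem main_concentration_general (hA : IsKernel A) (hB : IsKernel B) (hτ : IsMixingBound A τ)
    (hp : IsStochastic p) {f : (Fin n → ℕ) → ℝ} (hf : HammingLipschitz f) {r : ℝ} (hr : 0 ≤ r) :
    prob (hmmLaw p A B n) {y | r < f y - expect (hmmLaw p A B n) f} ≤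
        Real.exp (-2 * r ^ 2 / ∑ k ∈ Finset.range n, (∑ s ∈ Finset.range (k + 1), τ s) ^ 2) ∧
    prob (hmmLaw p A B n) {y | r < expect (hmmLaw p A B n) f - f y} ≤
        Real.exp (-2 * r ^ 2 / ∑ k ∈ Finset.range n, (∑ s ∈ Finset.range (k + 1), τ s) ^ 2) := by
  have hlaw : IsPMF (hmmLaw p A B n) := hp.isPMF.hmmLaw hA hB
  have hupper {g : (Fin n → ℕ) → ℝ} (hg : HammingLipschitz g) :=
    prob_lt_sub_expect_le hlaw hg.exists_abs_le.choose_spec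
      (expect_exp_mul_hmmLaw_le hA hB hτ hp.isPMF hg) hr
  refine ⟨hupper hf, ?_⟩
  simpa only [expect_neg, neg_sub_neg] using hupper hf.neg

end Concentration

/-- **Theorem 1 (main concentration inequality).** If `Y₁,…,Yₙ` is a hidden Markov chain whose
underlying Markov chain is `(G,θ)`-geometrically ergodic, then for every `f : ℕⁿ → ℝ` that is
1-Lipschitz w.r.t. the Hamming metric and every `ε > 0`, both tails
`f − 𝔼f > nε` and `𝔼f − f > nε` have probability at most `exp(−n(1−θ)²ε²/(2G²))`. -/
theorem main_concentration (G θ : ℝ) (p₁ π : ℕ → ℝ) (A B : ℕ → ℕ → ℝ)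
    (hp₁ : IsStochastic p₁) (hA : IsKernel A) (hB : IsKernel B)
    (hge : IsGeomErgodic A π G θ)
    (n : ℕ) (f : (Fin n → ℕ) → ℝ)
    (hf : ∀ x y : Fin n → ℕ, |f x - f y| ≤ (hammingDist x y : ℝ))
    (ε : ℝ) (hε : 0 < ε) :
    prob (hmmLaw p₁ A B n) {y | f y - expect (hmmLaw p₁ A B n) f > n * ε}
        ≤ Real.exp (-(n * (1 - θ) ^ 2 * ε ^ 2) / (2 * G ^ 2)) ∧
    prob (hmmLaw p₁ A B n) {y | expect (hmmLaw p₁ A B n) f - f y > n * ε}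
        ≤ Real.exp (-(n * (1 - θ) ^ 2 * ε ^ 2) / (2 * G ^ 2)) := by
  have htails := main_concentration_general hA hB (hge.isMixingBound hA) hp₁ hf (r := n * ε)
    (by positivity)
  have hbound := exp_neg_div_sum_geom_sq_le (zero_lt_one.trans_le hge.1) hge.2.1 hge.2.2.1 n ε
  exact ⟨htails.1.trans hbound, htails.2.trans hbound⟩

end
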